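/- arXiv:2202.10148 — 2 statements merged into one kernel-verified Lean document; each statement's English description precedes it below -/
import Mathlib

section
/- Let n, d, r be positive integers with 1 ≤ d ≤ n, r ≤ d, and r ≤ n−d+1. Let z_1,…,z_r ∈ ℂ be pairwise distinct and nonzero, let b_1,…,b_r ∈ ℂ be all nonzero, and let y ∈ ℂ^n be defined by y_k = Σ_{ℓ=1}^r b_ℓ z_ℓ^k for k = 1,…,n. Then the rank of the Hankelization H(y) is exactly r. -/
open Matrix

noncomputable section

/-- Hankelization of a vector `x ∈ ℂⁿ` with pencil parameter `d`:
the `d × (n-d+1)` matrix with entries `H(x)_{ij} = x_{i+j-1}` (1-based). -/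
def hankel (n d : ℕ) (hd : 1 ≤ d) (hdn : d ≤ n) (x : Fin n → ℂ) :
    Matrix (Fin d) (Fin (n - d + 1)) ℂ :=
  Matrix.of fun i j => x ⟨i.val + j.val, by have := i.2; have := j.2; omega⟩

/-- Frobenius norm of a complex matrix. -/
def frobNorm {m n : ℕ} (A : Matrix (Fin m) (Fin n) ℂ) : ℝ :=
  Real.sqrt (∑ i, ∑ j, ‖A i j‖ ^ 2)

/-- Nuclear norm of a complex matrix: the sum of the square roots of the
eigenvalues of `Aᴴ * A` (i.e. the sum of singular values). -/
def nuclearNorm {m n : ℕ} (A : Matrix (Fin m) (Fin n) ℂ) : ℝ :=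
  ∑ i, Real.sqrt ((Matrix.isHermitian_conjTranspose_mul_self A).eigenvalues i)

/-- The normalized Hankel basis matrix `A_k = H(e_k) / ‖H(e_k)‖_F`. -/
def basisMat (n d : ℕ) (hd : 1 ≤ d) (hdn : d ≤ n) (k : Fin n) :
    Matrix (Fin d) (Fin (n - d + 1)) ℂ :=
  (frobNorm (hankel n d hd hdn (Pi.single k 1)) : ℂ)⁻¹ • hankel n d hd hdn (Pi.single k 1)

end

/-!
The Hankel matrix of the exponential sum `s k = ∑ ℓ, c ℓ * z ℓ ^ k` factors as `Vᵀ * diag c * W`,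
where `V` and `W` are Vandermonde matrices with one row per node, so its rank is at most the number
`r` of nodes. For the leading `r × r` block both Vandermonde factors are the square one, whence the
determinant of that block is `(∏ ℓ, c ℓ) * (∏ i < j, (z j - z i)) ^ 2`, and the rank is exactly `r`
when the coefficients are nonzero and the nodes distinct. A signal starting at `z ℓ ^ 1` is the case
`c ℓ = b ℓ * z ℓ`.
-/

/-- The `m × n` Hankel matrix of a sequence `s`, with rows, columns and terms indexed from `0`.
Unlike in `hankel`, the sequence is infinite, so that leading blocks of Hankel matrices are again
Hankel matrices of the same sequence. -/
def hankelMatrix {α : Type*} (s : ℕ → α) (m n : ℕ) : Matrix (Fin m) (Fin n) α :=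
  of fun i j => s (i + j)

theorem hankelMatrix_submatrix_castLE {α : Type*} (s : ℕ → α) {m n m' n' : ℕ}
    (hm : m' ≤ m) (hn : n' ≤ n) :
    (hankelMatrix s m n).submatrix (Fin.castLE hm) (Fin.castLE hn) = hankelMatrix s m' n' :=
  rfl

theorem hankel_eq_hankelMatrix {n d : ℕ} (hd : 1 ≤ d) (hdn : d ≤ n) {x : Fin n → ℂ} {s : ℕ → ℂ}
    (hxs : ∀ k : Fin n, x k = s k) :
    hankel n d hd hdn x = hankelMatrix s d (n - d + 1) := by
  ext i j
  exact hxs _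

section ExponentialSum

variable {R : Type*} [CommRing R]

theorem hankelMatrix_sum_mul_pow {ι : Type*} [Fintype ι] [DecidableEq ι] (z c : ι → R) (m n : ℕ) :
    hankelMatrix (fun k => ∑ ℓ, c ℓ * z ℓ ^ k) m n =
      (rectVandermonde z 1 m)ᵀ * diagonal c * rectVandermonde z 1 n := by
  ext i j
  rw [mul_apply]
  simp only [hankelMatrix, of_apply, mul_diagonal, transpose_apply, rectVandermonde_apply,
    Pi.one_apply, one_pow, mul_one]
  exact Finset.sum_congr rfl fun ℓ _ => by ring

theorem rank_hankelMatrix_sum_mul_pow_le [Nontrivial R] {ι : Type*} [Fintype ι] (z c : ι → R)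
    (m n : ℕ) :
    (hankelMatrix (fun k => ∑ ℓ, c ℓ * z ℓ ^ k) m n).rank ≤ Fintype.card ι := by
  classical
  rw [hankelMatrix_sum_mul_pow]
  exact (rank_mul_le_left _ _).trans (rank_le_card_width _)

theorem det_hankelMatrix_sum_mul_pow {r : ℕ} (z c : Fin r → R) :
    (hankelMatrix (fun k => ∑ ℓ, c ℓ * z ℓ ^ k) r r).det =
      (∏ ℓ, c ℓ) * (vandermonde z).det ^ 2 := by
  rw [hankelMatrix_sum_mul_pow, ← projVandermonde, ← vandermonde_eq_projVandermonde, det_mul,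
    det_mul, det_transpose, det_diagonal]
  ring

theorem rank_hankel_eq_general [IsDomain R] {m n r : ℕ} (hrm : r ≤ m) (hrn : r ≤ n)
    {z c : Fin r → R} (hz : Function.Injective z) (hc : ∀ ℓ, c ℓ ≠ 0) :
    (hankelMatrix (fun k => ∑ ℓ, c ℓ * z ℓ ^ k) m n).rank = r := by
  set s : ℕ → R := fun k => ∑ ℓ, c ℓ * z ℓ ^ k
  have rank_le : (hankelMatrix s m n).rank ≤ r := by
    simpa using rank_hankelMatrix_sum_mul_pow_le z c m n
  have det_ne_zero : (hankelMatrix s r r).det ≠ 0 := by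
    rw [det_hankelMatrix_sum_mul_pow]
    exact mul_ne_zero (Finset.prod_ne_zero_iff.mpr fun ℓ _ => hc ℓ)
      (pow_ne_zero 2 (det_vandermonde_ne_zero_iff.mpr hz))
  refine rank_le.antisymm ?_
  calc
    r = (hankelMatrix s r r).rank := by rw [rank_of_det_ne_zero det_ne_zero, Fintype.card_fin]
    _ ≤ (hankelMatrix s m n).rank := by
      rw [← hankelMatrix_submatrix_castLE s hrm hrn]
      exact rank_submatrix_le _ _ _

end ExponentialSum

/-- **Exact rank of the Hankelization of an exponential signal.**
If `y k = ∑ ℓ b ℓ * (z ℓ)^k` for `k = 1, …, n` (1-based), with the `z ℓ`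
pairwise distinct and nonzero, the `b ℓ` nonzero, `r ≤ d` and `r ≤ n - d + 1`,
then `rank H(y) = r`. -/
theorem rank_hankel_eq
    (n d r : ℕ) (hd : 1 ≤ d) (hdn : d ≤ n) (hr : 0 < r)
    (hrd : r ≤ d) (hrn : r ≤ n - d + 1)
    (z b : Fin r → ℂ)
    (hz : Function.Injective z) (hz0 : ∀ ℓ, z ℓ ≠ 0) (hb : ∀ ℓ, b ℓ ≠ 0)
    (y : Fin n → ℂ)
    (hy : ∀ k : Fin n, y k = ∑ ℓ, b ℓ * z ℓ ^ ((k : ℕ) + 1)) :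
    (hankel n d hd hdn y).rank = r := by
  rw [hankel_eq_hankelMatrix hd hdn (s := fun k => ∑ ℓ, b ℓ * z ℓ * z ℓ ^ k)
    fun k => by simp only [hy, pow_succ', mul_assoc]]
  exact rank_hankel_eq_general hrd hrn hz fun ℓ => mul_ne_zero (hb ℓ) (hz0 ℓ)
end

section
/- (Variational characterization of the nuclear norm) Let A be an m × n complex matrix. Then (i) for every positive integer p and every pair of matrices U ∈ ℂ^{m×p}, V ∈ ℂ^{n×p} with A = U V^H, one has ‖A‖_* ≤ (‖U‖_F² + ‖V‖_F²)/2; and (ii) there exist a positive integer p and matrices U ∈ ℂ^{m×p}, V ∈ ℂ^{n×p} with A = U V^H and ‖A‖_* = (‖U‖_F² + ‖V‖_F²)/2. Consequently, ‖A‖_* = min over all factorizations A = U V^H of (‖U‖_F² + ‖V‖_F²)/2. -/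
open Matrix

/-!
Let `|A| = (Aᴴ A)^{1/2}`, so that `‖A‖_* = tr |A|`, and take a polar decomposition `A = Q |A|` with
`Qᴴ Q ≤ 1` and `Qᴴ A = |A|`. If `A = U Vᴴ`, then `tr |A| = tr (Qᴴ U Vᴴ) = ⟪Q V, U⟫`, which is at
most `(‖Q V‖_F² + ‖U‖_F²) / 2 ≤ (‖V‖_F² + ‖U‖_F²) / 2`. Conversely, writing `|A| = Rᴴ R`, the
factors `U = Q Rᴴ` and `V = Rᴴ` both have squared Frobenius norm `tr |A|`.
-/

theorem exists_mul_conjTranspose_eq_one_of_embedding {R n p : Type*} [Semiring R] [StarRing R]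
    [DecidableEq n] [Fintype p] (f : n ↪ p) : ∃ J : Matrix n p R, J * Jᴴ = 1 := by
  classical
  refine ⟨(1 : Matrix p p R).submatrix f (Equiv.refl p), ?_⟩
  rw [conjTranspose_submatrix, submatrix_mul_equiv, conjTranspose_one, Matrix.one_mul,
    submatrix_one f f.injective]

section RCLike

variable {𝕜 m n p : Type*} [RCLike 𝕜] [Fintype m] [Fintype n] [Fintype p]

section FrobeniusNorm

open scoped Matrix.Norms.Frobenius ComplexOrder

theorem frobenius_norm_sq_eq_sum (A : Matrix m n 𝕜) : ‖A‖ ^ 2 = ∑ i, ∑ j, ‖A i j‖ ^ 2 := by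
  simp only [frobenius_norm_def, Real.rpow_two, ← Real.sqrt_eq_rpow]
  exact Real.sq_sqrt (by positivity)

theorem frobNorm_eq_frobenius_norm {k l : ℕ} (A : Matrix (Fin k) (Fin l) ℂ) :
    frobNorm A = ‖A‖ := by
  rw [frobNorm, ← frobenius_norm_sq_eq_sum, Real.sqrt_sq (norm_nonneg A)]

theorem frobenius_norm_sq_eq_re_trace (A : Matrix m n 𝕜) :
    ‖A‖ ^ 2 = RCLike.re (Aᴴ * A).trace := by
  simp only [frobenius_norm_sq_eq_sum, trace, diag_apply, mul_apply, conjTranspose_apply, map_sum,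
    RCLike.star_def, RCLike.conj_mul, ← RCLike.ofReal_pow, RCLike.ofReal_re]
  exact Finset.sum_comm

theorem re_trace_conjTranspose_mul_le (X Y : Matrix m n 𝕜) :
    RCLike.re (Xᴴ * Y).trace ≤ (‖X‖ ^ 2 + ‖Y‖ ^ 2) / 2 := by
  have re_trace_symm : RCLike.re (Yᴴ * X).trace = RCLike.re (Xᴴ * Y).trace := by
    rw [← RCLike.conj_re, ← RCLike.star_def, ← trace_conjTranspose, conjTranspose_mul,
      conjTranspose_conjTranspose]
  have expand : ‖X - Y‖ ^ 2 = ‖X‖ ^ 2 + ‖Y‖ ^ 2 - 2 * RCLike.re (Xᴴ * Y).trace := by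
    simp only [frobenius_norm_sq_eq_re_trace, conjTranspose_sub, Matrix.sub_mul, Matrix.mul_sub,
      trace_sub, map_sub, re_trace_symm]
    ring
  linarith [sq_nonneg ‖X - Y‖]

theorem frobenius_norm_mul_le_of_posSemidef [DecidableEq n] {Q : Matrix m n 𝕜}
    (hQ : (1 - Qᴴ * Q).PosSemidef) (V : Matrix n p 𝕜) : ‖Q * V‖ ≤ ‖V‖ := by
  have h : 0 ≤ RCLike.re (Vᴴ * (1 - Qᴴ * Q) * V).trace :=
    (RCLike.nonneg_iff.mp (hQ.conjTranspose_mul_mul_same V).trace_nonneg).1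
  rw [Matrix.mul_sub, Matrix.sub_mul, trace_sub, map_sub, Matrix.mul_one] at h
  rw [← sq_le_sq₀ (norm_nonneg _) (norm_nonneg _), frobenius_norm_sq_eq_re_trace,
    frobenius_norm_sq_eq_re_trace, conjTranspose_mul]
  simpa only [Matrix.mul_assoc, sub_nonneg] using h

theorem frobenius_norm_mul_of_mul_conjTranspose_eq_one [DecidableEq n] {J : Matrix n p 𝕜}
    (hJ : J * Jᴴ = 1) (U : Matrix m n 𝕜) : ‖U * J‖ = ‖U‖ := by
  rw [← sq_eq_sq₀ (norm_nonneg _) (norm_nonneg _), frobenius_norm_sq_eq_re_trace,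
    frobenius_norm_sq_eq_re_trace, trace_mul_comm, conjTranspose_mul, Matrix.mul_assoc,
    ← Matrix.mul_assoc J, hJ, Matrix.one_mul, trace_mul_comm]

end FrobeniusNorm

section Modulus

variable [DecidableEq n]

open scoped MatrixOrder ComplexOrder

/-- The modulus `|A| = (Aᴴ A)^{1/2}` of a rectangular matrix. -/
noncomputable def modulus (A : Matrix m n 𝕜) : Matrix n n 𝕜 :=
  cfc Real.sqrt (Aᴴ * A)

theorem posSemidef_modulus (A : Matrix m n 𝕜) : (modulus A).PosSemidef :=
  (cfc_nonneg fun _ _ => Real.sqrt_nonneg _).posSemidef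

theorem continuousOn_spectrum_real (M : Matrix n n 𝕜) (f : ℝ → ℝ) :
    ContinuousOn f (spectrum ℝ M) :=
  M.finite_real_spectrum.continuousOn f

theorem conjTranspose_mul_cfc_mul_mul_cfc (A : Matrix m n 𝕜) (f g : ℝ → ℝ) :
    (A * cfc f (Aᴴ * A))ᴴ * (A * cfc g (Aᴴ * A)) = cfc (fun x => f x * x * g x) (Aᴴ * A) := by
  have cont := continuousOn_spectrum_real (Aᴴ * A)
  have hA : IsSelfAdjoint (Aᴴ * A) := isHermitian_conjTranspose_mul_self A
  have hf : (cfc f (Aᴴ * A))ᴴ = cfc f (Aᴴ * A) := IsSelfAdjoint.cfc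
  rw [cfc_mul (fun x => f x * x) g _ (cont _) (cont _), cfc_mul f (fun x => x) _ (cont _) (cont _),
    cfc_id' ℝ _ hA, conjTranspose_mul, hf]
  simp only [Matrix.mul_assoc]

theorem mul_cfc_inv_sqrt_mul_sqrt (A : Matrix m n 𝕜) :
    A * cfc (fun x => (√x)⁻¹ * √x) (Aᴴ * A) = A := by
  have cont := continuousOn_spectrum_real (Aᴴ * A)
  have hA : IsSelfAdjoint (Aᴴ * A) := isHermitian_conjTranspose_mul_self A
  have residual_eq_zero : A * cfc (fun x => 1 - (√x)⁻¹ * √x) (Aᴴ * A) = 0 := by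
    rw [← conjTranspose_mul_self_eq_zero, conjTranspose_mul_cfc_mul_mul_cfc, ← cfc_zero ℝ]
    refine cfc_congr fun x hx => ?_
    obtain rfl | hx_pos :=
      (spectrum_nonneg_of_nonneg (posSemidef_conjTranspose_mul_self A).nonneg hx).eq_or_lt
    · simp
    · simp [inv_mul_cancel₀ (Real.sqrt_pos.mpr hx_pos).ne']
  rw [cfc_sub (fun _ => 1) _ _ (cont _) (cont _), cfc_const_one ℝ _ hA, Matrix.mul_sub,
    Matrix.mul_one, sub_eq_zero] at residual_eq_zero
  exact residual_eq_zero.symm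

theorem exists_polar_decomposition (A : Matrix m n 𝕜) :
    ∃ Q : Matrix m n 𝕜, (1 - Qᴴ * Q).PosSemidef ∧ Qᴴ * A = modulus A ∧ Q * modulus A = A := by
  have cont := continuousOn_spectrum_real (Aᴴ * A)
  have hA : IsSelfAdjoint (Aᴴ * A) := isHermitian_conjTranspose_mul_self A
  have inv_sqrt_mul_self (x : ℝ) : (√x)⁻¹ * x = √x := by rw [inv_mul_eq_div, Real.div_sqrt]
  -- Since `0⁻¹ = 0`, this functional calculus is the pseudoinverse of `|A|`.
  refine ⟨A * cfc (fun x => (√x)⁻¹) (Aᴴ * A), ?_, ?_, ?_⟩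
  · rw [conjTranspose_mul_cfc_mul_mul_cfc, ← le_iff]
    refine cfc_le_one _ _ fun x _ => ?_
    rw [inv_sqrt_mul_self]
    exact mul_inv_le_one
  · have h := conjTranspose_mul_cfc_mul_mul_cfc A (fun x => (√x)⁻¹) (fun _ => 1)
    rw [cfc_const_one ℝ _ hA, Matrix.mul_one] at h
    rw [h]
    exact cfc_congr fun x _ => by rw [mul_one, inv_sqrt_mul_self]
  · rw [modulus, Matrix.mul_assoc, ← cfc_mul _ _ _ (cont _) (cont _), mul_cfc_inv_sqrt_mul_sqrt]

/-- The nuclear norm over any `RCLike` field and any finite index types, given by the same formula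
as `nuclearNorm`. -/
noncomputable def traceNorm (A : Matrix m n 𝕜) : ℝ :=
  ∑ i, √((isHermitian_conjTranspose_mul_self A).eigenvalues i)

theorem trace_modulus (A : Matrix m n 𝕜) : (modulus A).trace = (traceNorm A : 𝕜) := by
  rw [modulus, (isHermitian_conjTranspose_mul_self A).cfc_eq, IsHermitian.cfc,
    Unitary.conjStarAlgAut_apply, trace_mul_cycle, Unitary.coe_star_mul_self, Matrix.one_mul,
    trace_diagonal, traceNorm, RCLike.ofReal_sum]
  rfl

theorem traceNorm_eq_re_trace_modulus (A : Matrix m n 𝕜) :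
    traceNorm A = RCLike.re (modulus A).trace := by
  rw [trace_modulus, RCLike.ofReal_re]

end Modulus

section Factorization

variable [DecidableEq n]

open scoped MatrixOrder Matrix.Norms.Frobenius ComplexOrder

theorem traceNorm_mul_conjTranspose_le (U : Matrix m p 𝕜) (V : Matrix n p 𝕜) :
    traceNorm (U * Vᴴ) ≤ (‖U‖ ^ 2 + ‖V‖ ^ 2) / 2 := by
  obtain ⟨Q, hQ, hQA, -⟩ := exists_polar_decomposition (U * Vᴴ)
  calc traceNorm (U * Vᴴ)
      = RCLike.re ((Q * V)ᴴ * U).trace := by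
        rw [traceNorm_eq_re_trace_modulus, ← hQA, conjTranspose_mul, ← Matrix.mul_assoc,
          trace_mul_comm, Matrix.mul_assoc]
    _ ≤ (‖Q * V‖ ^ 2 + ‖U‖ ^ 2) / 2 := re_trace_conjTranspose_mul_le _ _
    _ ≤ (‖V‖ ^ 2 + ‖U‖ ^ 2) / 2 := by gcongr; exact frobenius_norm_mul_le_of_posSemidef hQ V
    _ = (‖U‖ ^ 2 + ‖V‖ ^ 2) / 2 := by rw [add_comm]

theorem exists_eq_mul_conjTranspose_frobenius_norm_sq_eq (A : Matrix m n 𝕜) :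
    ∃ (U : Matrix m n 𝕜) (V : Matrix n n 𝕜),
      A = U * Vᴴ ∧ ‖U‖ ^ 2 = traceNorm A ∧ ‖V‖ ^ 2 = traceNorm A := by
  obtain ⟨Q, -, hQA, hA⟩ := exists_polar_decomposition A
  obtain ⟨R, hR⟩ := CStarAlgebra.nonneg_iff_eq_star_mul_self.mp (posSemidef_modulus A).nonneg
  rw [star_eq_conjTranspose] at hR
  refine ⟨Q * Rᴴ, Rᴴ, ?_, ?_, ?_⟩
  · rw [conjTranspose_conjTranspose, Matrix.mul_assoc, ← hR, hA]
  · have trace_gram : ((Q * Rᴴ)ᴴ * (Q * Rᴴ)).trace = (modulus A).trace :=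
      calc ((Q * Rᴴ)ᴴ * (Q * Rᴴ)).trace
          = (Qᴴ * (Q * (Rᴴ * R))).trace := by
            rw [conjTranspose_mul, conjTranspose_conjTranspose, Matrix.mul_assoc, trace_mul_comm]
            simp only [Matrix.mul_assoc]
        _ = (modulus A).trace := by rw [← hR, hA, hQA]
    rw [frobenius_norm_sq_eq_re_trace, trace_gram, traceNorm_eq_re_trace_modulus]
  · rw [frobenius_norm_conjTranspose, frobenius_norm_sq_eq_re_trace, ← hR,
      traceNorm_eq_re_trace_modulus]

theorem exists_eq_mul_conjTranspose_traceNorm_eq (f : n ↪ p) (A : Matrix m n 𝕜) :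
    ∃ (U : Matrix m p 𝕜) (V : Matrix n p 𝕜),
      A = U * Vᴴ ∧ traceNorm A = (‖U‖ ^ 2 + ‖V‖ ^ 2) / 2 := by
  obtain ⟨U, V, hA, hU, hV⟩ := exists_eq_mul_conjTranspose_frobenius_norm_sq_eq A
  obtain ⟨J, hJ⟩ := exists_mul_conjTranspose_eq_one_of_embedding (R := 𝕜) f
  refine ⟨U * J, V * J, ?_, ?_⟩
  · rw [conjTranspose_mul, Matrix.mul_assoc, ← Matrix.mul_assoc J, hJ, Matrix.one_mul, hA]
  · rw [frobenius_norm_mul_of_mul_conjTranspose_eq_one hJ,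
      frobenius_norm_mul_of_mul_conjTranspose_eq_one hJ, hU, hV, add_self_div_two]

theorem nuclearNorm_variational_general (A : Matrix m n 𝕜) :
    IsLeast
      {x : ℝ | ∃ p : ℕ, 0 < p ∧ ∃ (U : Matrix m (Fin p) 𝕜) (V : Matrix n (Fin p) 𝕜),
        A = U * Vᴴ ∧ x = (‖U‖ ^ 2 + ‖V‖ ^ 2) / 2}
      (traceNorm A) := by
  constructor
  · -- `card n` columns suffice, but for empty `n` the requirement `0 < p` needs a spare one.
    exact ⟨Fintype.card n + 1, Nat.succ_pos _, exists_eq_mul_conjTranspose_traceNorm_eq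
      ((Fintype.equivFin n).toEmbedding.trans Fin.castSuccEmb) A⟩
  · rintro _ ⟨p, -, U, V, rfl, rfl⟩
    exact traceNorm_mul_conjTranspose_le U V

end Factorization

end RCLike

/-- **Variational characterization of the nuclear norm.**
(i) For every factorization `A = U * Vᴴ` (with `p ≥ 1` columns),
`‖A‖_* ≤ (‖U‖_F² + ‖V‖_F²)/2`; (ii) some factorization attains equality;
consequently `‖A‖_*` is the minimum of `(‖U‖_F² + ‖V‖_F²)/2` over all
factorizations `A = U * Vᴴ`. -/
theorem nuclearNorm_variational (m n : ℕ) (A : Matrix (Fin m) (Fin n) ℂ) :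
    (∀ p : ℕ, 0 < p → ∀ (U : Matrix (Fin m) (Fin p) ℂ) (V : Matrix (Fin n) (Fin p) ℂ),
        A = U * Vᴴ → nuclearNorm A ≤ (frobNorm U ^ 2 + frobNorm V ^ 2) / 2) ∧
    (∃ p : ℕ, 0 < p ∧ ∃ (U : Matrix (Fin m) (Fin p) ℂ) (V : Matrix (Fin n) (Fin p) ℂ),
        A = U * Vᴴ ∧ nuclearNorm A = (frobNorm U ^ 2 + frobNorm V ^ 2) / 2) ∧
    IsLeast
      {x : ℝ | ∃ p : ℕ, 0 < p ∧
        ∃ (U : Matrix (Fin m) (Fin p) ℂ) (V : Matrix (Fin n) (Fin p) ℂ),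
          A = U * Vᴴ ∧ x = (frobNorm U ^ 2 + frobNorm V ^ 2) / 2}
      (nuclearNorm A) := by
  simp only [frobNorm_eq_frobenius_norm]
  have least := nuclearNorm_variational_general A
  exact ⟨fun p hp U V hA => least.2 ⟨p, hp, U, V, hA, rfl⟩, least.1, least⟩
end
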